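/- arXiv:2511.13140 — 2 statements merged into one kernel-verified Lean document; each statement's English description precedes it below -/
import Mathlib

section
/- For every h ≥ 6: if for every side assignment s' : {2,…,h−3} → {up, down} the caterpillar cubic Halin graph G(h−2,s') admits a star 5-edge coloring, then for every side assignment s : {2,…,h−1} → {up, down} the caterpillar cubic Halin graph G(h,s) admits a star 5-edge coloring. -/
/-- A star `k`-edge coloring of a simple graph `G`: a proper edge coloring with colors
`0, …, k-1` such that the edges of every path of length 4 and of every cycle of length 4
receive at least 3 distinct colors. -/
def IsStarEdgeColoring {V : Type*} (G : SimpleGraph V) (k : ℕ) (c : Sym2 V → ℕ) : Prop :=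
  (∀ e ∈ G.edgeSet, c e < k) ∧
  (∀ a b b' : V, G.Adj a b → G.Adj a b' → b ≠ b' → c s(a, b) ≠ c s(a, b')) ∧
  (∀ v0 v1 v2 v3 v4 : V, ([v0, v1, v2, v3, v4] : List V).Nodup →
    G.Adj v0 v1 → G.Adj v1 v2 → G.Adj v2 v3 → G.Adj v3 v4 →
    3 ≤ ({c s(v0, v1), c s(v1, v2), c s(v2, v3), c s(v3, v4)} : Finset ℕ).card) ∧
  (∀ v0 v1 v2 v3 : V, ([v0, v1, v2, v3] : List V).Nodup →
    G.Adj v0 v1 → G.Adj v1 v2 → G.Adj v2 v3 → G.Adj v3 v0 →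
    3 ≤ ({c s(v0, v1), c s(v1, v2), c s(v2, v3), c s(v3, v0)} : Finset ℕ).card)

/-- Vertices of the caterpillar cubic Halin graph `G(h, s)`: `Sum.inl i` is the spine
vertex `v_{i+1}` (for `i : Fin h`) and `Sum.inr j` is the leaf `u_j` (for `j : Fin (h+2)`). -/
abbrev CatVert (h : ℕ) := Fin h ⊕ Fin (h + 2)

/-- The indices of the leaves along the exterior cycle of `G(h, s)`: `u_0`, then the
leaves `u_i` (`2 ≤ i ≤ h - 1`) with `s i = false` (down) in increasing order, then
`u_h`, `u_{h+1}`, then the leaves with `s i = true` (up) in decreasing order, then `u_1`. -/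
def extCycle (h : ℕ) (s : ℕ → Bool) : List ℕ :=
  0 :: ((List.range' 2 (h - 2)).filter fun i => s i = false) ++ [h, h + 1] ++
    ((List.range' 2 (h - 2)).filter fun i => s i = true).reverse ++ [1]

/-- Base adjacency relation of `G(h, s)`: spine edges `v_i v_{i+1}`; tree edges
`v_1 u_0`, `v_1 u_1`, `v_h u_h`, `v_h u_{h+1}`, and `v_i u_i` for `2 ≤ i ≤ h - 1`;
and the exterior cycle through the leaves, whose consecutive pairs (including the
wrap-around pair) are exactly the pairs of `extCycle h s` zipped with its rotation. -/
def catRel (h : ℕ) (s : ℕ → Bool) : CatVert h → CatVert h → Prop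
  | Sum.inl i, Sum.inl i' => i'.val = i.val + 1
  | Sum.inl i, Sum.inr j =>
      (i.val = 0 ∧ (j.val = 0 ∨ j.val = 1)) ∨
      (i.val = h - 1 ∧ (j.val = h ∨ j.val = h + 1)) ∨
      (j.val = i.val + 1 ∧ 2 ≤ j.val ∧ j.val ≤ h - 1)
  | Sum.inr j, Sum.inr j' => (j.val, j'.val) ∈ (extCycle h s).zip ((extCycle h s).rotate 1)
  | _, _ => False

/-- The caterpillar cubic Halin graph `G(h, s)`, whose characteristic tree is a
caterpillar with `h + 2` leaves, with side assignment `s` (`false` = down, `true` = up). -/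
def caterpillarHalin (h : ℕ) (s : ℕ → Bool) : SimpleGraph (CatVert h) :=
  SimpleGraph.fromRel (catRel h s)

/-!
Deleting the rim edges `u_0 u_1` and `u_h u_{h+1}` splits the rim into a lower and an upper path, so
`G(h, s)` consists of three strands (these two paths and the spine) with a triangle at each end and,
in between, one rung at each position, which leaves exactly one of the rim strands idle.

A bicolored path or cycle of length 4 has its two middle edges at a common vertex `v`, and whether
there is one can be read off from the colors of the edges at `v` and the sets of colors seen at the
neighbors of `v`. Hence a coloring can be built from left to right, remembering at each cut between
two neighboring positions only the three crossing edges, the colors seen at their left ends, and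
the colors allowed at their right ends. Up to permutations of the colors and of the two rim strands,
four cuts suffice: two after an even and two after an odd number of rungs. Whichever rim strand is
idle, a rung leads from each even cut to an odd cut and back. The left triangle opens into an even
cut and the odd cuts can be closed by the right triangle, which settles an odd number of rungs; for
an even number, the last two rungs and the right triangle are colored in one go.
-/

theorem IsStarEdgeColoring.comap {V W : Type*} {G : SimpleGraph V} {H : SimpleGraph W} {k : ℕ}
    {c : Sym2 W → ℕ} (hc : IsStarEdgeColoring H k c) (f : G.Copy H) :
    IsStarEdgeColoring G k (c ∘ Sym2.map f) := by
  obtain ⟨hlt, hproper, hpath, hcycle⟩ := hc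
  have hadj {a b : V} (h : G.Adj a b) : H.Adj (f a) (f b) := f.toHom.map_adj h
  have hnodup {l : List V} (h : l.Nodup) : (l.map f).Nodup := h.map f.injective
  refine ⟨fun e he => ?_, fun a b b' hb hb' hne => ?_, fun v₀ v₁ v₂ v₃ v₄ hv h₁ h₂ h₃ h₄ => ?_,
    fun v₀ v₁ v₂ v₃ hv h₁ h₂ h₃ h₄ => ?_⟩
  · exact hlt _ (f.toHom.map_mem_edgeSet he)
  · exact hproper _ _ _ (hadj hb) (hadj hb') (f.injective.ne hne)
  · exact hpath _ _ _ _ _ (hnodup hv) (hadj h₁) (hadj h₂) (hadj h₃) (hadj h₄)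
  · exact hcycle _ _ _ _ (hnodup hv) (hadj h₁) (hadj h₂) (hadj h₃) (hadj h₄)

theorem three_le_card_of_not_bicolored {α : Type*} [DecidableEq α] {a b c d : α} (hab : a ≠ b)
    (hbc : b ≠ c) (hcd : c ≠ d) (h : ¬(a = c ∧ b = d)) : 3 ≤ ({a, b, c, d} : Finset α).card := by
  by_cases hac : a = c
  · have hbd : b ≠ d := fun k => h ⟨hac, k⟩
    rw [← Finset.card_eq_three.2 ⟨a, b, d, hab, hac ▸ hcd, hbd, rfl⟩]
    exact Finset.card_le_card (by grind)
  · rw [← Finset.card_eq_three.2 ⟨a, b, c, hab, hac, hbc, rfl⟩]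
    exact Finset.card_le_card (by grind)

/-- An edge at a vertex `v` is represented by its color together with a set containing the colors
seen at its other end. Two edges at `v` are compatible if they differ in color and are not the
middle edges of a bicolored path or cycle of length 4. -/
def Compatible {α : Type*} (p q : α × Finset α) : Prop :=
  p.1 ≠ q.1 ∧ ¬(q.1 ∈ p.2 ∧ p.1 ∈ q.2)

theorem Compatible.mono {α : Type*} {p q p' q' : α × Finset α} (h : Compatible p q)
    (hp : p'.1 = p.1 ∧ p'.2 ⊆ p.2) (hq : q'.1 = q.1 ∧ q'.2 ⊆ q.2) : Compatible p' q' := by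
  refine ⟨hp.1 ▸ hq.1 ▸ h.1, fun k => h.2 ⟨?_, ?_⟩⟩
  · exact hq.1 ▸ hp.2 k.1
  · exact hp.1 ▸ hq.2 k.2

/-- The star condition around a vertex: `C` contains the colors of the edges `p m` at the vertex,
which are represented as in `Compatible` and pairwise compatible. -/
def StarVertex {α ι : Type*} (C : Finset α) (p : ι → α × Finset α) : Prop :=
  (∀ m, (p m).1 ∈ C) ∧ Pairwise fun m m' => Compatible (p m) (p m')

theorem StarVertex.of_injective {α ι κ : Type*} {C : Finset α} {p : ι → α × Finset α}
    (h : StarVertex C p) {q : κ → α × Finset α} {f : κ → ι} (hf : f.Injective)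
    (hq : ∀ m, (q m).1 = (p (f m)).1 ∧ (q m).2 ⊆ (p (f m)).2) : StarVertex C q :=
  ⟨fun m => (hq m).1 ▸ h.1 (f m), fun m m' hm => (h.2 (hf.ne hm)).mono (hq m) (hq m')⟩

theorem StarVertex.map {α β ι : Type*} {C : Finset α} {p : ι → α × Finset α} (h : StarVertex C p)
    (π : α ↪ β) : StarVertex (C.map π) fun m => (π (p m).1, (p m).2.map π) := by
  refine ⟨fun m => Finset.mem_map_of_mem π (h.1 m), fun m m' hm => ?_⟩
  simpa [Compatible] using h.2 hm

theorem isStarEdgeColoring_of_starVertex {V : Type*} {G : SimpleGraph V} {k : ℕ}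
    {c : Sym2 V → Fin k} {C : V → Finset (Fin k)}
    (h : ∀ v, StarVertex (C v) fun w : G.neighborSet v => (c s(v, w), C w)) :
    IsStarEdgeColoring G k fun e => (c e : ℕ) := by
  have hswap (v w : V) : c s(v, w) = c s(w, v) := by rw [Sym2.eq_swap]
  have hmem {v w : V} (hvw : G.Adj v w) : c s(v, w) ∈ C v := (h v).1 ⟨w, hvw⟩
  have hcompat {v w w' : V} (hw : G.Adj v w) (hw' : G.Adj v w') (hne : w ≠ w') :
      Compatible (c s(v, w), C w) (c s(v, w'), C w') :=
    @(h v).2 ⟨w, hw⟩ ⟨w', hw'⟩ (Subtype.coe_ne_coe.1 hne)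
  have hproper {a b b' : V} (hb : G.Adj a b) (hb' : G.Adj a b') (hne : b ≠ b') :
      (c s(a, b) : ℕ) ≠ c s(a, b') := Fin.val_injective.ne (hcompat hb hb' hne).1
  have htrail {v₀ v₁ v₂ v₃ v₄ : V} (h₁ : G.Adj v₀ v₁) (h₂ : G.Adj v₁ v₂) (h₃ : G.Adj v₂ v₃)
      (h₄ : G.Adj v₃ v₄) (h₀₂ : v₀ ≠ v₂) (h₁₃ : v₁ ≠ v₃) (h₂₄ : v₂ ≠ v₄) :
      3 ≤ ({(c s(v₀, v₁) : ℕ), (c s(v₁, v₂) : ℕ), (c s(v₂, v₃) : ℕ), (c s(v₃, v₄) : ℕ)} :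
        Finset ℕ).card := by
    refine three_le_card_of_not_bicolored ?_ ?_ ?_ ?_
    · exact hswap v₀ v₁ ▸ hproper h₁.symm h₂ h₀₂
    · exact hswap v₁ v₂ ▸ hproper h₂.symm h₃ h₁₃
    · exact hswap v₂ v₃ ▸ hproper h₃.symm h₄ h₂₄
    · rintro ⟨hc₁, hc₂⟩
      refine (hcompat h₂.symm h₃ h₁₃).2 ⟨?_, ?_⟩
      · exact Fin.ext hc₁ ▸ hswap v₀ v₁ ▸ hmem h₁.symm
      · exact hswap v₁ v₂ ▸ Fin.ext hc₂ ▸ hmem h₄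
  refine ⟨fun e _ => (c e).isLt, fun _ _ _ => hproper, ?_, ?_⟩
  · intro v₀ v₁ v₂ v₃ v₄ hv h₁ h₂ h₃ h₄
    exact htrail h₁ h₂ h₃ h₄ (by grind) (by grind) (by grind)
  · intro v₀ v₁ v₂ v₃ hv h₁ h₂ h₃ h₄
    exact htrail h₁ h₂ h₃ h₄ (by grind) (by grind) (by grind)

/-! ### Strand graphs -/

/-- `i` and `j` are consecutive elements of `{t | p t}`. -/
def Consecutive (p : ℕ → Prop) (i j : ℕ) : Prop :=
  p i ∧ p j ∧ i < j ∧ ∀ t, i < t → t < j → ¬p t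

theorem Consecutive.left_unique {p : ℕ → Prop} {i i' j : ℕ} (h : Consecutive p i j)
    (h' : Consecutive p i' j) : i = i' := by
  rcases lt_trichotomy i i' with hlt | rfl | hlt
  · exact absurd h'.1 (h.2.2.2 i' hlt h'.2.2.1)
  · rfl
  · exact absurd h.1 (h'.2.2.2 i hlt h.2.2.1)

theorem Consecutive.right_unique {p : ℕ → Prop} {i j j' : ℕ} (h : Consecutive p i j)
    (h' : Consecutive p i j') : j = j' := by
  rcases lt_trichotomy j j' with hlt | rfl | hlt
  · exact absurd h.2.1 (h'.2.2.2 j h.2.2.1 hlt)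
  · rfl
  · exact absurd h'.2.1 (h.2.2.2 j' h'.2.2.1 hlt)

/-- The strand different from two distinct strands `T` and `T'`. -/
def third (T T' : Fin 3) : Fin 3 := -(T + T')

theorem third_comm (T T' : Fin 3) : third T T' = third T' T := by rw [third, third, add_comm]

theorem third_third {T T' : Fin 3} (h : T ≠ T') : third T (third T T') = T' := by
  revert T T'; decide

theorem eq_third {T T' k : Fin 3} (h : T ≠ T') (hk : T ≠ k) (hk' : T' ≠ k) : T' = third T k := by
  revert T T' k; decide

/-- The strand `T` of the strand graph has a vertex at position `t`. -/
def Occupied (n : ℕ) (idle : ℕ → Fin 3) (T : Fin 3) (t : ℕ) : Prop :=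
  t ≤ n + 1 ∧ (t = 0 ∨ t = n + 1 ∨ idle t ≠ T)

/-- Three strands, that is, paths running through the positions `0, …, n + 1` from left to right,
joined by triangles at both end positions and by one rung at each position `t` in between, where
the strand `idle t` has no vertex. -/
def strandGraph (n : ℕ) (idle : ℕ → Fin 3) : SimpleGraph (Fin 3 × ℕ) where
  Adj v w :=
    (v.2 = w.2 ∧ v.1 ≠ w.1 ∧ Occupied n idle v.1 v.2 ∧ Occupied n idle w.1 w.2) ∨
      (v.1 = w.1 ∧
        (Consecutive (Occupied n idle v.1) v.2 w.2 ∨ Consecutive (Occupied n idle v.1) w.2 v.2))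
  symm.symm := by
    rintro ⟨T, i⟩ ⟨T', j⟩ (⟨h, hne, hv, hw⟩ | ⟨rfl, h⟩)
    · exact .inl ⟨h.symm, hne.symm, hw, hv⟩
    · exact .inr ⟨rfl, h.symm⟩
  loopless.irrefl := by
    rintro v (⟨-, hne, -⟩ | ⟨-, h | h⟩)
    · exact hne rfl
    · exact h.2.2.1.false
    · exact h.2.2.1.false

theorem snd_le_of_strandGraph_adj {n : ℕ} {idle : ℕ → Fin 3} {v w : Fin 3 × ℕ}
    (h : (strandGraph n idle).Adj v w) : w.2 ≤ n + 1 := by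
  rcases h with ⟨-, -, -, h⟩ | ⟨-, h | h⟩
  exacts [h.1, h.2.1.1, h.1.1]

theorem strandGraph_adj_unique {n : ℕ} {idle : ℕ → Fin 3} {v w w' : Fin 3 × ℕ}
    (h : (strandGraph n idle).Adj v w) (h' : (strandGraph n idle).Adj v w') (hT : w.1 = w'.1)
    (hside : (w.2 < v.2 ↔ w'.2 < v.2) ∨ (v.2 < w.2 ↔ v.2 < w'.2)) : w = w' := by
  refine Prod.ext hT ?_
  rcases h with ⟨hw, hne, -⟩ | ⟨hvw, hr | hl⟩ <;>
    rcases h' with ⟨hw', hne', -⟩ | ⟨hvw', hr' | hl'⟩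
  · rw [← hw, ← hw']
  · exact absurd (hvw'.trans hT.symm) hne
  · exact absurd (hvw'.trans hT.symm) hne
  · exact absurd (hvw.trans hT) hne'
  · exact hr.right_unique hr'
  · have := hr.2.2.1
    have := hl'.2.2.1
    omega
  · exact absurd (hvw.trans hT) hne'
  · have := hl.2.2.1
    have := hr'.2.2.1
    omega
  · exact hl.left_unique hl'

/-- A strand edge crossing a cut, with a set containing the colors seen at its left end and a set
in which the colors seen at its right end have to lie. -/
@[ext]
structure CutEdge (α : Type*) where
  color : α
  left : Finset α
  right : Finset α

/-- The strand edges between two neighboring positions of a strand graph. -/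
abbrev Cut (α : Type*) := Fin 3 → CutEdge α

section Transfer

variable {α : Type*}

/-- A strand edge as seen from its right end, in the sense of `Compatible`. -/
def CutEdge.leftEnd (e : CutEdge α) : α × Finset α := (e.color, e.left)

/-- A strand edge as seen from its left end, in the sense of `Compatible`. -/
def CutEdge.rightEnd (e : CutEdge α) : α × Finset α := (e.color, e.right)

/-- The cut `s'` may follow the cut `s` if the rung between them has color `t` and the strand `k`
is idle there. -/
def Step (k : Fin 3) (s : Cut α) (t : α) (s' : Cut α) : Prop :=
  s' k = s k ∧ ∀ T ≠ k, (s' T).left ⊆ (s T).right ∧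
    StarVertex (s' T).left ![(s T).leftEnd, (t, (s' (third T k)).left), (s' T).rightEnd]

/-- The star condition at a triangle whose vertices have color sets `C`, whose edge opposite to the
strand `T` has color `x T`, and to which the strand edges `e` are attached. -/
def StarTriangle (e : Fin 3 → α × Finset α) (C : Fin 3 → Finset α) (x : Fin 3 → α) : Prop :=
  ∀ T, StarVertex (C T) fun T' => if T' = T then e T else (x (third T T'), C T')

/-- The cut `s` may follow the left triangle, colored by `x`. -/
def Opens (x : Fin 3 → α) (s : Cut α) : Prop :=
  StarTriangle (fun T => (s T).rightEnd) (fun T => (s T).left) x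

/-- The right triangle, colored by `x` and with color sets `C` at its vertices, may follow the
cut `s`. -/
def Closes (s : Cut α) (C : Fin 3 → Finset α) (x : Fin 3 → α) : Prop :=
  (∀ T, C T ⊆ (s T).right) ∧ StarTriangle (fun T => (s T).leftEnd) C x

/-- A left-to-right description of an edge coloring of `strandGraph n idle`: `cut t` consists of the
strand edges between the positions `t` and `t + 1`, and `vert t T` is the color at position `t` of
the edge joining the two strands other than `T`. Only the sets `left` matter in `cut (n + 1)`, which
are the color sets of the right triangle. -/
structure StrandColoring (n : ℕ) (idle : ℕ → Fin 3) (α : Type*) where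
  cut : ℕ → Cut α
  vert : ℕ → Fin 3 → α
  opens : Opens (vert 0) (cut 0)
  step : ∀ t < n, Step (idle (t + 1)) (cut t) (vert (t + 1) (idle (t + 1))) (cut (t + 1))
  closes : Closes (cut n) (fun T => (cut (n + 1) T).left) (vert (n + 1))

end Transfer

namespace StrandColoring

variable {n : ℕ} {idle : ℕ → Fin 3} {α : Type*} (S : StrandColoring n idle α)

/-- The edge coloring of the strand graph described by `S`. -/
def color : Sym2 (Fin 3 × ℕ) → α :=
  Sym2.lift ⟨fun v w =>
    if v.1 = w.1 then (S.cut (min v.2 w.2) v.1).color else S.vert (min v.2 w.2) (third v.1 w.1),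
    fun v w => by
      simp only [min_comm v.2, third_comm v.1, eq_comm (a := v.1)]
      split_ifs with h
      · rw [h]
      · rfl⟩

theorem color_of_lt (T : Fin 3) {i j : ℕ} (h : i < j) :
    S.color s((T, i), (T, j)) = (S.cut i T).color := by
  simp [color, h.le]

theorem color_of_gt (T : Fin 3) {i j : ℕ} (h : j < i) :
    S.color s((T, i), (T, j)) = (S.cut j T).color := by
  rw [Sym2.eq_swap, S.color_of_lt T h]

theorem color_of_ne {T T' : Fin 3} (i : ℕ) (h : T ≠ T') :
    S.color s((T, i), (T', i)) = S.vert i (third T T') := by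
  simp [color, h]

theorem cut_eq {T : Fin 3} {i j : ℕ} (h : Consecutive (Occupied n idle T) i j) {t : ℕ} (hit : i ≤ t)
    (htj : t < j) : S.cut t T = S.cut i T := by
  obtain ⟨-, hj, -, hgap⟩ := h
  induction t, hit using Nat.le_induction with
  | base => rfl
  | succ t hit ih =>
    have hn : t < n := by have := hj.1; omega
    have hidle : idle (t + 1) = T := by
      have := hgap (t + 1) (by omega) htj
      grind [Occupied]
    rw [← ih (by omega), ← hidle, (S.step t hn).1]

theorem cut_pred {T : Fin 3} {i j : ℕ} (h : Consecutive (Occupied n idle T) i (j + 1)) :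
    S.cut j T = S.cut i T :=
  S.cut_eq h (by have := h.2.2.1; omega) j.lt_succ_self

theorem left_subset_right {T : Fin 3} {i j : ℕ} (h : Consecutive (Occupied n idle T) i j) :
    (S.cut j T).left ⊆ (S.cut i T).right := by
  obtain ⟨t, rfl⟩ := Nat.exists_eq_succ_of_ne_zero (Nat.ne_zero_of_lt h.2.2.1)
  rw [← S.cut_pred h]
  obtain ⟨hle, hocc⟩ := h.2.1
  rcases (Nat.le_of_succ_le_succ hle).lt_or_eq with hlt | rfl
  · exact ((S.step t hlt).2 T (by grind)).1
  · exact S.closes.1 T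

theorem starVertex_first (T : Fin 3) :
    StarVertex (S.cut 0 T).left fun w : (strandGraph n idle).neighborSet (T, 0) =>
      (S.color s((T, 0), w), (S.cut w.1.2 w.1.1).left) := by
  refine (S.opens T).of_injective (f := fun w => w.1.1) ?_ ?_
  · exact fun w w' hw => Subtype.ext (strandGraph_adj_unique w.2 w'.2 hw (.inl (by simp)))
  · rintro ⟨⟨T', j⟩, ⟨hj, hne, -⟩ | ⟨hT, h | h⟩⟩
    · cases hj
      simp [hne.symm, S.color_of_ne 0 hne]
    · cases hT
      simpa [S.color_of_lt T h.2.2.1, CutEdge.rightEnd] using S.left_subset_right h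
    · exact absurd h.2.2.1 j.not_lt_zero

theorem starVertex_last (T : Fin 3) :
    StarVertex (S.cut (n + 1) T).left fun w : (strandGraph n idle).neighborSet (T, n + 1) =>
      (S.color s((T, n + 1), w), (S.cut w.1.2 w.1.1).left) := by
  refine (S.closes.2 T).of_injective (f := fun w => w.1.1) ?_ ?_
  · exact fun w w' hw => Subtype.ext (strandGraph_adj_unique w.2 w'.2 hw (.inr (iff_of_false
      (snd_le_of_strandGraph_adj w.2).not_gt (snd_le_of_strandGraph_adj w'.2).not_gt)))
  · rintro ⟨⟨T', j⟩, ⟨hj, hne, -⟩ | ⟨hT, h | h⟩⟩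
    · cases hj
      simp [hne.symm, S.color_of_ne (n + 1) hne]
    · exact absurd h.2.1.1 h.2.2.1.not_ge
    · cases hT
      simp [S.color_of_gt T h.2.2.1, CutEdge.leftEnd, S.cut_pred h]

theorem starVertex_rung {T : Fin 3} {i : ℕ} (hi : i < n) (hT : T ≠ idle (i + 1)) :
    StarVertex (S.cut (i + 1) T).left fun w : (strandGraph n idle).neighborSet (T, i + 1) =>
      (S.color s((T, i + 1), w), (S.cut w.1.2 w.1.1).left) := by
  have hrung {w : Fin 3 × ℕ} (hw : (strandGraph n idle).Adj (T, i + 1) w) :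
      w.1 = if w.2 = i + 1 then third T (idle (i + 1)) else T := by
    rcases hw with ⟨hw, hne, -, hocc⟩ | ⟨hTw, hw⟩
    · rw [if_pos hw.symm]
      exact eq_third hne hT (by grind [Occupied])
    · rw [if_neg (hw.elim (·.2.2.1.ne') (·.2.2.1.ne))]
      exact hTw.symm
  refine ((S.step i hi).2 T hT).2.of_injective
    (f := fun w => if w.1.2 < i + 1 then 0 else if w.1.2 = i + 1 then 1 else 2) ?_ ?_
  · rintro ⟨w, hw⟩ ⟨w', hw'⟩ hf
    have hside : (w.2 < i + 1 ↔ w'.2 < i + 1) ∧ (w.2 = i + 1 ↔ w'.2 = i + 1) := by grind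
    refine Subtype.ext (strandGraph_adj_unique hw hw' ?_ (.inl hside.1))
    simp only [hrung hw, hrung hw', hside.2]
  · rintro ⟨⟨T', j⟩, hw⟩
    have hT' := hrung hw
    rcases hw with ⟨hj, hne, -⟩ | ⟨hTT', h | h⟩
    · cases hj
      obtain rfl : T' = third T (idle (i + 1)) := by simpa using hT'
      simp [S.color_of_ne (i + 1) hne, third_third hT]
    · cases hTT'
      have hlt := h.2.2.1
      simpa [S.color_of_lt T hlt, hlt.not_gt, hlt.ne', CutEdge.rightEnd] using
        S.left_subset_right h
    · cases hTT'
      simp [S.color_of_gt T h.2.2.1, h.2.2.1, CutEdge.leftEnd, S.cut_pred h]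

theorem exists_isStarEdgeColoring {k : ℕ} (S : StrandColoring n idle (Fin k)) :
    ∃ c, IsStarEdgeColoring (strandGraph n idle) k c := by
  refine ⟨_, isStarEdgeColoring_of_starVertex (c := S.color)
    (C := fun v => (S.cut v.2 v.1).left) ?_⟩
  rintro ⟨T, i⟩
  by_cases hocc : Occupied n idle T i
  · rcases i.eq_zero_or_pos with rfl | hpos
    · exact S.starVertex_first T
    rcases eq_or_ne i (n + 1) with rfl | hne
    · exact S.starVertex_last T
    obtain ⟨i, rfl⟩ := Nat.exists_eq_succ_of_ne_zero hpos.ne'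
    exact S.starVertex_rung (by grind [Occupied]) (by grind [Occupied])
  · have hisolated (w) : ¬(strandGraph n idle).Adj (T, i) w := by
      rintro (⟨-, -, h, -⟩ | ⟨-, h | h⟩)
      exacts [hocc h, hocc h.1, hocc h.2.1]
    exact ⟨fun w => absurd w.2 (hisolated w), fun w => absurd w.2 (hisolated w)⟩

end StrandColoring

/-! ### Coloring from left to right -/

section Extends

variable {α : Type*}

/-- The cut `s` extends to a star coloring of the part of a strand graph to its right, in which the
rungs have the idle strands `l`. -/
def Extends : List (Fin 3) → Cut α → Prop
  | [], s => ∃ C x, Closes s C x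
  | k :: l, s => ∃ t s', Step k s t s' ∧ Extends l s'

theorem Extends.exists_cut_vert {n : ℕ} {idle : ℕ → Fin 3} {s : Cut α} (x : Fin 3 → α)
    (h : Extends (List.ofFn fun t : Fin n => idle (t + 1)) s) :
    ∃ (cut : ℕ → Cut α) (vert : ℕ → Fin 3 → α), cut 0 = s ∧ vert 0 = x ∧
      (∀ t < n, Step (idle (t + 1)) (cut t) (vert (t + 1) (idle (t + 1))) (cut (t + 1))) ∧
      Closes (cut n) (fun T => (cut (n + 1) T).left) (vert (n + 1)) := by
  induction n generalizing idle s x with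
  | zero =>
    obtain ⟨C, y, hC⟩ := h
    exact ⟨fun t => t.casesOn s fun _ T => ⟨x T, C T, ∅⟩, fun t => t.casesOn x fun _ => y, rfl, rfl,
      fun t ht => absurd ht t.not_lt_zero, hC⟩
  | succ n ih =>
    rw [List.ofFn_succ] at h
    obtain ⟨c, s', hstep, hs'⟩ := h
    obtain ⟨cut, vert, rfl, hvert, hcut, hclose⟩ :=
      ih (idle := fun t => idle (t + 1)) (fun _ => c) hs'
    refine ⟨fun t => t.casesOn s cut, fun t => t.casesOn x vert, rfl, rfl, ?_, hclose⟩
    rintro (_ | t) ht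
    · simpa [hvert] using hstep
    · exact hcut t (Nat.lt_of_succ_lt_succ ht)

theorem Opens.nonempty_strandColoring {n : ℕ} {idle : ℕ → Fin 3} {s : Cut α} {x : Fin 3 → α}
    (hx : Opens x s) (h : Extends (List.ofFn fun t : Fin n => idle (t + 1)) s) :
    Nonempty (StrandColoring n idle α) := by
  obtain ⟨cut, vert, rfl, rfl, hcut, hclose⟩ := h.exists_cut_vert x
  exact ⟨cut, vert, hx, hcut, hclose⟩

end Extends

section Relabel

open Equiv

variable {α : Type*}

/-- Rename the colors by `π`, and the strands in such a way that `τ T` becomes `T`. -/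
def Cut.relabel (s : Cut α) (π : Perm α) (τ : Perm (Fin 3)) : Cut α := fun T =>
  ⟨π (s (τ T)).color, (s (τ T)).left.map π.toEmbedding, (s (τ T)).right.map π.toEmbedding⟩

theorem Cut.relabel_one (s : Cut α) : s.relabel 1 1 = s := by
  funext T
  simp only [relabel, Perm.one_apply]
  congr <;> exact Finset.map_refl

theorem Cut.relabel_relabel (s : Cut α) (π π' : Perm α) (τ τ' : Perm (Fin 3)) :
    (s.relabel π τ).relabel π' τ' = s.relabel (π' * π) (τ * τ') := by
  funext T
  simp only [relabel, Finset.map_map, Perm.mul_apply]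
  rfl

theorem map_third (τ : Perm (Fin 3)) {T T' : Fin 3} (h : T ≠ T') :
    τ (third T T') = third (τ T) (τ T') := by
  revert τ T T'; decide

theorem Step.relabel {k : Fin 3} {s s' : Cut α} {t : α} (π : Perm α) (τ : Perm (Fin 3))
    (h : Step (τ k) s t s') : Step k (s.relabel π τ) (π t) (s'.relabel π τ) := by
  refine ⟨by simp only [Cut.relabel, h.1], fun T hT => ?_⟩
  obtain ⟨hsub, hstar⟩ := h.2 (τ T) (τ.injective.ne hT)
  refine ⟨Finset.map_subset_map.2 hsub, ?_⟩
  refine (hstar.map π.toEmbedding).of_injective Function.injective_id fun m => ?_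
  fin_cases m
  · exact ⟨rfl, subset_rfl⟩
  · simp [Cut.relabel, map_third τ hT]
  · exact ⟨rfl, subset_rfl⟩

theorem StarTriangle.relabel {e : Fin 3 → α × Finset α} {C : Fin 3 → Finset α} {x : Fin 3 → α}
    (h : StarTriangle e C x) (π : Perm α) (τ : Perm (Fin 3)) :
    StarTriangle (fun T => (π (e (τ T)).1, (e (τ T)).2.map π.toEmbedding))
      (fun T => (C (τ T)).map π.toEmbedding) (π ∘ x ∘ τ) := by
  intro T
  refine ((h (τ T)).map π.toEmbedding).of_injective τ.injective fun T' => ?_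
  rcases eq_or_ne T' T with rfl | hT
  · simp
  · simp [hT, map_third τ hT.symm]

theorem Closes.relabel {s : Cut α} {C : Fin 3 → Finset α} {x : Fin 3 → α} (h : Closes s C x)
    (π : Perm α) (τ : Perm (Fin 3)) :
    Closes (s.relabel π τ) (fun T => (C (τ T)).map π.toEmbedding) (π ∘ x ∘ τ) :=
  ⟨fun T => Finset.map_subset_map.2 (h.1 (τ T)), h.2.relabel π τ⟩

theorem Extends.relabel {l : List (Fin 3)} {s : Cut α} (π : Perm α) (τ : Perm (Fin 3))
    (h : Extends (l.map τ) s) : Extends l (s.relabel π τ) := by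
  induction l generalizing s with
  | nil =>
    obtain ⟨C, x, hC⟩ := h
    exact ⟨_, _, hC.relabel π τ⟩
  | cons k l ih =>
    obtain ⟨t, s', hstep, hs'⟩ := h
    exact ⟨_, _, hstep.relabel π τ, ih hs'⟩

/-- The cuts that arise from cuts in `X` by permuting the colors and the strands `1` and `2`. -/
def relabelings (X : Set (Cut α)) : Set (Cut α) :=
  {s | ∃ s₀ ∈ X, ∃ (π : Perm α) (τ : Perm (Fin 3)), τ 0 = 0 ∧ s₀.relabel π τ = s}

theorem subset_relabelings (X : Set (Cut α)) : X ⊆ relabelings X :=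
  fun s hs => ⟨s, hs, 1, 1, rfl, s.relabel_one⟩

theorem relabel_mem_relabelings {X : Set (Cut α)} {s : Cut α} (hs : s ∈ relabelings X) (π : Perm α)
    {τ : Perm (Fin 3)} (hτ : τ 0 = 0) : s.relabel π τ ∈ relabelings X := by
  obtain ⟨s₀, hs₀, π₀, τ₀, hτ₀, rfl⟩ := hs
  exact ⟨s₀, hs₀, π * π₀, τ₀ * τ, by simp [hτ, hτ₀], (s₀.relabel_relabel π₀ π τ₀ τ).symm⟩

theorem perm_apply_ne_zero {β : Type*} [Zero β] {τ : Perm β} (hτ : τ 0 = 0) {k : β} (hk : k ≠ 0) :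
    τ k ≠ 0 :=
  hτ ▸ τ.injective.ne hk

theorem exists_step_of_mem_relabelings {X Y : Set (Cut α)}
    (h : ∀ s ∈ X, ∀ k ≠ 0, ∃ t, ∃ s' ∈ relabelings Y, Step k s t s') {s : Cut α}
    (hs : s ∈ relabelings X) {k : Fin 3} (hk : k ≠ 0) :
    ∃ t, ∃ s' ∈ relabelings Y, Step k s t s' := by
  obtain ⟨s₀, hs₀, π, τ, hτ, rfl⟩ := hs
  obtain ⟨t, s', hs', hstep⟩ := h s₀ hs₀ (τ k) (perm_apply_ne_zero hτ hk)
  exact ⟨π t, s'.relabel π τ, relabel_mem_relabelings hs' π hτ, hstep.relabel π τ⟩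

theorem extends_of_mem_relabelings {X : Set (Cut α)} {l : List (Fin 3)} (hl : ∀ k ∈ l, k ≠ 0)
    (h : ∀ s ∈ X, ∀ l' : List (Fin 3), l'.length = l.length → (∀ k ∈ l', k ≠ 0) → Extends l' s)
    {s : Cut α} (hs : s ∈ relabelings X) : Extends l s := by
  obtain ⟨s₀, hs₀, π, τ, hτ, rfl⟩ := hs
  refine (h s₀ hs₀ (l.map τ) (List.length_map τ) ?_).relabel π τ
  exact List.forall_mem_map.2 fun k hk => perm_apply_ne_zero hτ (hl k hk)

end Relabel

section FourCuts

open Equiv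

instance {α ι : Type*} [Fintype ι] [DecidableEq ι] [DecidableEq α] (C : Finset α)
    (p : ι → α × Finset α) : Decidable (StarVertex C p) := by
  unfold StarVertex Pairwise Compatible; infer_instance

instance {α : Type*} [DecidableEq α] : DecidableEq (CutEdge α) := fun _ _ =>
  decidable_of_iff _ CutEdge.ext_iff.symm

instance {α : Type*} [DecidableEq α] (k : Fin 3) (s : Cut α) (t : α) (s' : Cut α) :
    Decidable (Step k s t s') := by
  unfold Step; infer_instance

instance {α : Type*} [DecidableEq α] (s : Cut α) (C : Fin 3 → Finset α) (x : Fin 3 → α) :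
    Decidable (Closes s C x) := by
  unfold Closes StarTriangle; infer_instance

instance {α : Type*} [DecidableEq α] (x : Fin 3 → α) (s : Cut α) : Decidable (Opens x s) := by
  unfold Opens StarTriangle; infer_instance

/-- One of the four cuts, found by computer search, from which colorings are built. -/
def oddCut₁ : Cut (Fin 5) :=
  ![⟨0, {0, 1, 2}, {1, 2}ᶜ⟩, ⟨1, {0, 1, 2}, {2}ᶜ⟩, ⟨2, {0, 2, 3}, {3}ᶜ⟩]

/-- See `oddCut₁`. -/
def oddCut₂ : Cut (Fin 5) :=
  ![⟨0, {0, 1, 2}, {1, 2}ᶜ⟩, ⟨0, {0, 1, 3}, {1, 3}ᶜ⟩, ⟨0, {0, 1, 4}, {1, 4}ᶜ⟩]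

/-- See `oddCut₁`. -/
def evenCut₁ : Cut (Fin 5) :=
  ![⟨0, {0, 1, 2}, Finset.univ⟩, ⟨1, {1, 2, 3}, {2, 3}ᶜ⟩, ⟨4, {1, 3, 4}, {3}ᶜ⟩]

/-- See `oddCut₁`. -/
def evenCut₂ : Cut (Fin 5) :=
  ![⟨0, {0, 1, 2}, Finset.univ⟩, ⟨1, {1, 2, 3}, {2, 3}ᶜ⟩, ⟨4, {1, 2, 4}, {2}ᶜ⟩]

/-- The cuts used, up to relabeling, after an odd number of rungs. -/
def oddCuts : Set (Cut (Fin 5)) := {oddCut₁, oddCut₂}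

/-- The cuts used, up to relabeling, after an even number of rungs. -/
def evenCuts : Set (Cut (Fin 5)) := {evenCut₁, evenCut₂}

theorem opens_evenCut₁ : Opens ![3, 1, 2] evenCut₁ := by decide +kernel

theorem extends_nil_of_mem_oddCuts : ∀ s ∈ oddCuts, Extends [] s := by
  rintro s (rfl | rfl)
  · exact ⟨![{0, 3, 4}, {0, 1, 3}, {0, 2, 4}], ![0, 4, 3], by decide +kernel⟩
  · exact ⟨![{0, 3, 4}, {0, 2, 4}, {0, 2, 3}], ![2, 3, 4], by decide +kernel⟩

theorem fin_three_eq_of_ne_zero {k : Fin 3} (hk : k ≠ 0) : k = 1 ∨ k = 2 := by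
  revert k; decide

theorem exists_step_of_mem_oddCuts : ∀ s ∈ oddCuts, ∀ k ≠ 0,
    ∃ t, ∃ s' ∈ relabelings evenCuts, Step k s t s' := by
  rintro s (rfl | rfl) k hk <;> rcases fin_three_eq_of_ne_zero hk with rfl | rfl
  · exact ⟨4, evenCut₁.relabel c[0, 3, 2, 4, 1] (swap 1 2), ⟨_, .inl rfl, _, _, by decide, rfl⟩,
      by decide +kernel⟩
  · exact ⟨3, evenCut₂.relabel c[0, 4, 2, 3, 1] 1, ⟨_, .inr rfl, _, _, rfl, rfl⟩, by decide +kernel⟩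
  · exact ⟨3, evenCut₂.relabel c[0, 4, 2, 3, 1] 1, ⟨_, .inr rfl, _, _, rfl, rfl⟩, by decide +kernel⟩
  · exact ⟨4, evenCut₂.relabel (c[0, 3, 1] * c[2, 4]) (swap 1 2),
      ⟨_, .inr rfl, _, _, by decide, rfl⟩, by decide +kernel⟩

theorem exists_step_of_mem_evenCuts : ∀ s ∈ evenCuts, ∀ k ≠ 0,
    ∃ t, ∃ s' ∈ relabelings oddCuts, Step k s t s' := by
  rintro s (rfl | rfl) k hk <;> rcases fin_three_eq_of_ne_zero hk with rfl | rfl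
  · exact ⟨2, oddCut₂.relabel c[0, 1, 2] 1, ⟨_, .inr rfl, _, _, rfl, rfl⟩, by decide +kernel⟩
  · exact ⟨4, oddCut₁.relabel (c[0, 1] * c[2, 4]) 1, ⟨_, .inl rfl, _, _, rfl, rfl⟩,
      by decide +kernel⟩
  · exact ⟨3, oddCut₂.relabel c[0, 1, 3, 2] 1, ⟨_, .inr rfl, _, _, rfl, rfl⟩, by decide +kernel⟩
  · exact ⟨4, oddCut₁.relabel (c[0, 1] * c[2, 4, 3]) 1, ⟨_, .inl rfl, _, _, rfl, rfl⟩,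
      by decide +kernel⟩

/-- The cut after `s` when `k` is idle, `y k` is the color of the rung and `y T` is the color of the
next edge of each strand `T ≠ k`. The sets `right` are as large as `Step` permits. -/
def Cut.next {α : Type*} [Fintype α] [DecidableEq α] (s : Cut α) (k : Fin 3) (y : Fin 3 → α) :
    Cut α := fun T =>
  if T = k then s k else
    ⟨y T, {(s T).color, y k, y T}, {c | (c = (s T).color → y T ∉ (s T).left) ∧
      (c = y k → y T ∉ ({(s (third T k)).color, y k, y (third T k)} : Finset α))}⟩

theorem extends_pair {α : Type*} [Fintype α] [DecidableEq α] {s : Cut α} {k k' : Fin 3}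
    (y y' x : Fin 3 → α)
    (h : Step k s (y k) (s.next k y) ∧ Step k' (s.next k y) (y' k') ((s.next k y).next k' y') ∧
      Closes ((s.next k y).next k' y')
        (fun T => {((s.next k y).next k' y' T).color, x (T + 1), x (T + 2)}) x) :
    Extends [k, k'] s :=
  ⟨_, _, h.1, _, _, h.2.1, _, _, h.2.2⟩

theorem extends_pair_of_mem_evenCuts : ∀ s ∈ evenCuts, ∀ k ≠ 0, ∀ k' ≠ 0, Extends [k, k'] s := by
  rintro s (rfl | rfl) k hk k' hk' <;> rcases fin_three_eq_of_ne_zero hk with rfl | rfl <;>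
    rcases fin_three_eq_of_ne_zero hk' with rfl | rfl
  · exact extends_pair ![3, 2, 1] ![1, 0, 2] ![0, 3, 4] (by decide +kernel)
  · exact extends_pair ![3, 2, 1] ![2, 4, 0] ![3, 0, 1] (by decide +kernel)
  · exact extends_pair ![2, 0, 4] ![3, 1, 0] ![2, 4, 1] (by decide +kernel)
  · exact extends_pair ![2, 0, 4] ![3, 3, 1] ![0, 2, 4] (by decide +kernel)
  · exact extends_pair ![1, 3, 0] ![4, 2, 1] ![4, 3, 0] (by decide +kernel)
  · exact extends_pair ![2, 3, 0] ![3, 0, 4] ![2, 1, 4] (by decide +kernel)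
  · exact extends_pair ![2, 0, 4] ![3, 1, 0] ![2, 4, 1] (by decide +kernel)
  · exact extends_pair ![2, 0, 4] ![1, 2, 3] ![0, 3, 4] (by decide +kernel)

theorem extends_of_mem_relabelings_evenCuts {l : List (Fin 3)} {s : Cut (Fin 5)} (hne : l ≠ [])
    (hl : ∀ k ∈ l, k ≠ 0) (hs : s ∈ relabelings evenCuts) : Extends l s := by
  match l with
  | [k] =>
    obtain ⟨t, s', hs', hstep⟩ :=
      exists_step_of_mem_relabelings exists_step_of_mem_evenCuts hs (hl k (by simp))
    refine ⟨t, s', hstep, extends_of_mem_relabelings (by simp) (fun s hs l' hl' _ => ?_) hs'⟩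
    rw [List.length_eq_zero_iff.1 hl']
    exact extends_nil_of_mem_oddCuts s hs
  | [k, k'] =>
    refine extends_of_mem_relabelings hl (fun s hs l' hl' hl'₀ => ?_) hs
    obtain ⟨a, b, rfl⟩ := List.length_eq_two.1 hl'
    exact extends_pair_of_mem_evenCuts s hs a (hl'₀ a (by simp)) b (hl'₀ b (by simp))
  | k :: k' :: k'' :: l =>
    obtain ⟨t, s', hs', hstep⟩ :=
      exists_step_of_mem_relabelings exists_step_of_mem_evenCuts hs (hl k (by simp))
    obtain ⟨t', s'', hs'', hstep'⟩ :=
      exists_step_of_mem_relabelings exists_step_of_mem_oddCuts hs' (hl k' (by simp))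
    exact ⟨t, s', hstep, t', s'', hstep', extends_of_mem_relabelings_evenCuts (by simp)
      (fun m hm => hl m (by simp [hm])) hs''⟩

theorem exists_isStarEdgeColoring_strandGraph {n : ℕ} {idle : ℕ → Fin 3} (hn : n ≠ 0)
    (hidle : ∀ t, idle t ≠ 0) : ∃ c, IsStarEdgeColoring (strandGraph n idle) 5 c := by
  have hmem : evenCut₁ ∈ relabelings evenCuts := subset_relabelings _ (.inl rfl)
  obtain ⟨S⟩ := opens_evenCut₁.nonempty_strandColoring (n := n) (idle := idle)
    (extends_of_mem_relabelings_evenCuts (by simpa) (by simp [List.mem_ofFn, hidle]) hmem)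
  exact S.exists_isStarEdgeColoring

end FourCuts

/-! ### The caterpillar as a strand graph -/

theorem isChain_consecutive_mem {l : List ℕ} (hl : l.Pairwise (· < ·)) :
    l.IsChain (Consecutive (· ∈ l)) := by
  rw [List.isChain_iff_forall_rel_of_append_cons_cons]
  rintro i j l₁ l₂ rfl
  simp only [List.pairwise_append, List.pairwise_cons, List.mem_cons, forall_eq_or_imp] at hl
  refine ⟨by simp, by simp, hl.2.1.1.1, fun t hit htj ht => ?_⟩
  grind

theorem rel_of_mem_zip_rotate_one {α : Type*} {R : α → α → Prop} {l : List α} (hl : l.IsChain R)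
    (hwrap : ∀ x ∈ l.getLast?, ∀ y ∈ l.head?, R x y) {a b : α} (hab : (a, b) ∈ l.zip (l.rotate 1)) :
    R a b := by
  obtain ⟨i, hi, hget⟩ := List.mem_iff_getElem.1 hab
  simp only [List.getElem_zip, List.getElem_rotate, Prod.mk.injEq] at hget
  obtain ⟨rfl, rfl⟩ := hget
  rw [List.length_zip, List.length_rotate, min_self] at hi
  rcases (Nat.succ_le_of_lt hi).lt_or_eq with hlt | heq
  · simpa only [Nat.mod_eq_of_lt hlt] using List.isChain_iff_getElem.1 hl i hlt
  · have hmod : (i + 1) % l.length = 0 := by rw [← heq, Nat.succ_eq_add_one, Nat.mod_self]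
    simp only [hmod]
    refine hwrap _ ?_ _ ?_
    · simp [List.getLast?_eq_getElem?, ← heq]
    · simp [List.head?_eq_getElem?]

section Caterpillar

variable (n : ℕ) (s : ℕ → Bool)

/-- The leaves of `G(n + 2, s)` on one side of the spine, from left to right, where `u_0` and
`u_{n+2}` count as down and `u_1` and `u_{n+3}` as up. -/
def sideLeaves (b : Bool) : List ℕ :=
  (bif b then 1 else 0) :: ((List.range' 2 n).filter fun i => s i = b) ++
    [bif b then n + 3 else n + 2]

/-- The side of the leaf `u_j` of `G(n + 2, s)`, as in `sideLeaves`. -/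
def leafSide (j : ℕ) : Bool :=
  if j = 0 ∨ j = n + 2 then false else if j = 1 ∨ j = n + 3 then true else s j

/-- The strand of `strandGraph n (idleRail s)` formed by the leaves on one side; the spine becomes
the strand `0`. -/
def rail (b : Bool) : Fin 3 := bif b then 2 else 1

theorem rail_ne_zero (b : Bool) : rail b ≠ 0 := by
  revert b; decide

theorem rail_injective : rail.Injective := by
  unfold Function.Injective; decide

/-- The rim strand without a leaf at position `t`, the position of the spine vertex `v_{t+1}`. -/
def idleRail (t : ℕ) : Fin 3 := rail !(s (t + 1))

theorem idleRail_ne_zero (t : ℕ) : idleRail s t ≠ 0 := rail_ne_zero _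

/-- The vertex of the strand graph corresponding to the leaf `u_j`. -/
def leafVert (j : ℕ) : Fin 3 × ℕ := (rail (leafSide n s j), min (j - 1) (n + 1))

theorem extCycle_eq :
    extCycle (n + 2) s = sideLeaves n s false ++ (sideLeaves n s true).reverse := by
  simp [extCycle, sideLeaves]

variable {n s}

theorem mem_sideLeaves {b : Bool} {j : ℕ} :
    j ∈ sideLeaves n s b ↔ j < n + 4 ∧ leafSide n s j = b := by
  simp only [sideLeaves, leafSide]
  grind

theorem pairwise_lt_sideLeaves (b : Bool) : (sideLeaves n s b).Pairwise (· < ·) := by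
  have h : ((List.range' 2 n).filter fun i => s i = b).Pairwise (· < ·) :=
    (List.pairwise_lt_range' 1).filter _
  simp only [sideLeaves, List.cons_append, List.pairwise_cons, List.pairwise_append]
  exact ⟨by grind, h, by simp, by grind⟩

theorem occupied_rail {b : Bool} {t : ℕ} (h₀ : t ≠ 0) (hn : t < n + 1) :
    Occupied n (idleRail s) (rail b) t ↔ t + 1 ∈ sideLeaves n s b := by
  simp only [mem_sideLeaves, Occupied, idleRail, rail, leafSide]
  grind

theorem occupied_leafVert {j : ℕ} (hj : j < n + 4) :
    Occupied n (idleRail s) (leafVert n s j).1 (leafVert n s j).2 := by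
  simp only [Occupied, idleRail, leafVert, rail, leafSide]
  grind

theorem leafVert_adj_of_consecutive {b : Bool} {i j : ℕ}
    (h : Consecutive (· ∈ sideLeaves n s b) i j) :
    (strandGraph n (idleRail s)).Adj (leafVert n s i) (leafVert n s j) := by
  obtain ⟨hi, hj, hij, hgap⟩ := h
  rw [mem_sideLeaves] at hi hj
  have hT : (leafVert n s i).1 = (leafVert n s j).1 := by
    rw [leafVert, leafVert, hi.2, hj.2]
  refine .inr ⟨hT, .inl ⟨occupied_leafVert hi.1, hT ▸ occupied_leafVert hj.1, ?_, ?_⟩⟩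
  · simp only [leafVert]
    grind [leafSide]
  · intro t hit htj
    simp only [leafVert] at hit htj ⊢
    rw [hi.2, occupied_rail (by omega) (by omega)]
    exact hgap (t + 1) (by omega) (by omega)

theorem leafVert_adj_of_mem_zip {i j : ℕ}
    (h : (i, j) ∈ (extCycle (n + 2) s).zip ((extCycle (n + 2) s).rotate 1)) :
    (strandGraph n (idleRail s)).Adj (leafVert n s i) (leafVert n s j) := by
  set R := fun i j => (strandGraph n (idleRail s)).Adj (leafVert n s i) (leafVert n s j)
  have hside (b : Bool) : (sideLeaves n s b).IsChain R :=
    (isChain_consecutive_mem (pairwise_lt_sideLeaves b)).imp fun _ _ => leafVert_adj_of_consecutive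
  have hfirst : R 1 0 :=
    .inl ⟨by simp [leafVert], by simp [leafVert, leafSide, rail], occupied_leafVert (by omega),
      occupied_leafVert (by omega)⟩
  have hlast : R (n + 2) (n + 3) :=
    .inl ⟨by simp [leafVert], by simp [leafVert, leafSide, rail], occupied_leafVert (by omega),
      occupied_leafVert (by omega)⟩
  rw [extCycle_eq] at h
  refine rel_of_mem_zip_rotate_one (R := R) (List.isChain_append.2 ⟨hside false, ?_, ?_⟩) ?_ h
  · exact List.isChain_reverse.2 ((hside true).imp fun _ _ h => h.symm)
  · simpa [sideLeaves, List.getLast?_cons, List.getLast?_append] using hlast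
  · simpa [sideLeaves, List.getLast?_cons, List.getLast?_append] using hfirst

theorem occupied_zero {t : ℕ} (ht : t ≤ n + 1) : Occupied n (idleRail s) 0 t :=
  ⟨ht, .inr (.inr (idleRail_ne_zero s t))⟩

theorem strandGraph_adj_spine {t : ℕ} (ht : t ≤ n) :
    (strandGraph n (idleRail s)).Adj (0, t) (0, t + 1) :=
  .inr ⟨rfl, .inl ⟨occupied_zero (by omega), occupied_zero (by omega), t.lt_succ_self, by grind⟩⟩

variable (n s) in
/-- The vertex of the strand graph corresponding to a vertex of `G(n + 2, s)`. -/
def strandVert : CatVert (n + 2) → Fin 3 × ℕ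
  | .inl i => (0, i)
  | .inr j => leafVert n s j

theorem strandVert_injective : (strandVert n s).Injective := by
  rintro (i | j) (i' | j') h <;> simp only [strandVert, leafVert, Prod.mk.injEq] at h
  · rw [Fin.ext h.2]
  · exact absurd h.1.symm (rail_ne_zero _)
  · exact absurd h.1 (rail_ne_zero _)
  · have hside := rail_injective h.1
    simp only [leafSide] at hside
    rw [Fin.ext (by grind : (j : ℕ) = j')]

theorem strandVert_adj_of_catRel : ∀ {v w : CatVert (n + 2)}, catRel (n + 2) s v w →
    (strandGraph n (idleRail s)).Adj (strandVert n s v) (strandVert n s w)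
  | .inl i, .inl i', h => by
    have h : (i' : ℕ) = i + 1 := h
    rw [strandVert, strandVert, h]
    exact strandGraph_adj_spine (by omega)
  | .inl i, .inr j, h => by
    have hpos : (i : ℕ) = (leafVert n s j).2 := by
      simp only [catRel] at h
      simp only [leafVert]
      omega
    have hi : (i : ℕ) ≤ n + 1 := by omega
    exact .inl ⟨hpos, (rail_ne_zero _).symm, occupied_zero hi, occupied_leafVert j.isLt⟩
  | .inr j, .inr j', h => leafVert_adj_of_mem_zip h

variable (n s) in
/-- The embedding of `G(n + 2, s)` into the strand graph. -/
def caterpillarHalinCopy : (caterpillarHalin (n + 2) s).Copy (strandGraph n (idleRail s)) where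
  toHom.toFun := strandVert n s
  toHom.map_rel' h := h.2.elim strandVert_adj_of_catRel fun h => (strandVert_adj_of_catRel h).symm
  injective' := strandVert_injective

end Caterpillar

theorem caterpillarHalin_star5_step_general (h : ℕ) (hh : 3 ≤ h) (s : ℕ → Bool) :
    ∃ c : Sym2 (CatVert h) → ℕ, IsStarEdgeColoring (caterpillarHalin h s) 5 c := by
  obtain ⟨n, rfl⟩ := Nat.exists_eq_add_of_le' (Nat.le_of_succ_le hh)
  obtain ⟨c, hc⟩ := exists_isStarEdgeColoring_strandGraph (n := n) (idle := idleRail s) (by omega)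
    (idleRail_ne_zero s)
  exact ⟨_, hc.comap (caterpillarHalinCopy n s)⟩

/-- Inductive step: for `h ≥ 6`, if every caterpillar cubic Halin graph `G(h-2, s')`
admits a star 5-edge coloring, then so does every `G(h, s)`. -/
theorem caterpillarHalin_star5_step (h : ℕ) (hh : 6 ≤ h)
    (ih : ∀ s' : ℕ → Bool,
      ∃ c : Sym2 (CatVert (h - 2)) → ℕ, IsStarEdgeColoring (caterpillarHalin (h - 2) s') 5 c) :
    ∀ s : ℕ → Bool,
      ∃ c : Sym2 (CatVert h) → ℕ, IsStarEdgeColoring (caterpillarHalin h s) 5 c :=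
  fun s => caterpillarHalin_star5_step_general h (by omega) s
end

section
/- For every h ≥ 3, the necklace Ne_h has star chromatic index exactly 5: Ne_h admits a star 5-edge coloring but admits no star 4-edge coloring. -/
/-- Vertices of the necklace `Ne_h`: `Sum.inl i` is the spine vertex `v_{i+1}`
(for `i : Fin h`) and `Sum.inr j` is the leaf `u_j` (for `j : Fin (h+2)`). -/
abbrev NeckVert (h : ℕ) := Fin h ⊕ Fin (h + 2)

/-- The indices of the leaves along the exterior cycle of the necklace `Ne_h`:
`u_0, u_2, u_3, …, u_{h-1}, u_h, u_{h+1}, u_1` (and back to `u_0`). -/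
def neckCycle (h : ℕ) : List ℕ := 0 :: List.range' 2 (h - 2) ++ [h, h + 1, 1]

/-- Base adjacency relation of `Ne_h`: spine edges `v_i v_{i+1}`; tree edges
`v_1 u_0`, `v_1 u_1`, `v_h u_h`, `v_h u_{h+1}`, and `v_i u_i` for `2 ≤ i ≤ h - 1`;
and the exterior cycle through the leaves, whose consecutive pairs (including the
wrap-around pair) are exactly the pairs of `neckCycle h` zipped with its rotation. -/
def neckRel (h : ℕ) : NeckVert h → NeckVert h → Prop
  | Sum.inl i, Sum.inl i' => i'.val = i.val + 1
  | Sum.inl i, Sum.inr j =>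
      (i.val = 0 ∧ (j.val = 0 ∨ j.val = 1)) ∨
      (i.val = h - 1 ∧ (j.val = h ∨ j.val = h + 1)) ∨
      (j.val = i.val + 1 ∧ 2 ≤ j.val ∧ j.val ≤ h - 1)
  | Sum.inr j, Sum.inr j' => (j.val, j'.val) ∈ (neckCycle h).zip ((neckCycle h).rotate 1)
  | _, _ => False

/-- The necklace `Ne_h`: the cubic Halin graph over a caterpillar with `h + 2` leaves
having all leaf-edges on the same side of the spine. -/
def necklace (h : ℕ) : SimpleGraph (NeckVert h) := SimpleGraph.fromRel (neckRel h)

/-!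
Call the set of colors at a vertex its palette. A proper edge coloring is a star edge coloring iff
for any two edges `vx`, `vy`, it does not happen that the color of `vx` is in the palette of `y` and
the color of `vy` is in the palette of `x`.

Lower bound. With four colors each vertex of a cubic graph misses exactly one color. Let `xyz` be a
triangle and `xp` the third edge at `x`. As `p` sees the color of `xy` or that of `xz`, the color of
`xp` is missing at `y` or at `z`. So the color of `xp` is not that of `yz`, and likewise each vertex
of the triangle misses the color of the opposite side. Then all three see the fourth color, which at
`x` is the color of `xp`: a contradiction.

Upper bound. `Ne_h` is the Hamiltonian cycle `u_1 v_1 ⋯ v_h u_{h+1} u_h ⋯ u_2 u_0` with a perfect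
matching of chords. Give the chords color `4`, color the path up the spine cyclically by
`0, 1, 2, 3`, and the parallel path `u_0 u_2 ⋯ u_h u_{h+1}` likewise but shifted by two, so that the
ends of a chord see complementary pairs of colors. The parity of `h` obstructs this only at the
chord `u_1 u_{h+1}`, so for even `h` a few edges near `u_1` and this chord are recolored.
-/

theorem three_le_card_quadruple_iff {α : Type*} [DecidableEq α] {a b c d : α}
    (hab : a ≠ b) (hbc : b ≠ c) (hcd : c ≠ d) :
    3 ≤ ({a, b, c, d} : Finset α).card ↔ ¬ (a = c ∧ b = d) := by
  grind

/-- The colors that the edge coloring `c` gives to the edges of `G` at the vertex `v`. -/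
def palette {V α : Type*} (G : SimpleGraph V) (c : Sym2 V → α) (v : V) : Set α :=
  (fun w ↦ c s(v, w)) '' G.neighborSet v

theorem mem_palette_of_adj {V α : Type*} {G : SimpleGraph V} (c : Sym2 V → α) {v w : V}
    (hvw : G.Adj v w) : c s(v, w) ∈ palette G c v :=
  ⟨w, hvw, rfl⟩

namespace IsStarEdgeColoring

variable {V : Type*} {G : SimpleGraph V} {k : ℕ} {c : Sym2 V → ℕ}

theorem notMem_palette (hc : IsStarEdgeColoring G k c) {v x y : V} (hx : G.Adj v x)
    (hy : G.Adj v y) (hxy : x ≠ y) (hmem : c s(v, x) ∈ palette G c y) :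
    c s(v, y) ∉ palette G c x := by
  obtain ⟨-, hproper, hpath, hcycle⟩ := hc
  rintro ⟨x', hx' : G.Adj x x', hcx' : c s(x, x') = c s(v, y)⟩
  obtain ⟨y', hy' : G.Adj y y', hcy' : c s(y, y') = c s(v, x)⟩ := hmem
  have hne : c s(v, x) ≠ c s(v, y) := hproper v x y hx hy hxy
  have hx'v : x' ≠ v := by rintro rfl; exact hne (Sym2.eq_swap ▸ hcx')
  have hy'v : y' ≠ v := by rintro rfl; exact hne.symm (Sym2.eq_swap ▸ hcy')
  have hx'y : x' ≠ y := by
    rintro rfl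
    exact hproper x' x v hx'.symm hy.symm hx.ne' (by rw [Sym2.eq_swap, hcx', Sym2.eq_swap])
  have hy'x : y' ≠ x := by
    rintro rfl
    exact hproper y' y v hy'.symm hx.symm hy.ne' (by rw [Sym2.eq_swap, hcy', Sym2.eq_swap])
  have hcx : c s(x, v) = c s(v, x) := by rw [Sym2.eq_swap]
  obtain rfl | hx'y' := eq_or_ne x' y'
  · have hnodup : [x, v, y, x'].Nodup := by
      simp [*, hx.ne', hy.ne, hx'.ne, hx'v.symm, hy'.ne]
    have := hcycle x v y x' hnodup hx.symm hy hy' hx'.symm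
    rw [Sym2.eq_swap (a := x') (b := x), hcx, hcx', hcy'] at this
    exact (three_le_card_quadruple_iff hne hne.symm hne).1 this ⟨rfl, rfl⟩
  · have hnodup : [x', x, v, y, y'].Nodup := by
      simp [*, hx.ne', hy.ne, hx'.ne', hy'.ne, hy'x.symm, hy'v.symm]
    have := hpath x' x v y y' hnodup hx'.symm hx.symm hy hy'
    rw [Sym2.eq_swap (a := x') (b := x), hcx, hcx', hcy'] at this
    exact (three_le_card_quadruple_iff hne.symm hne hne.symm).1 this ⟨rfl, rfl⟩

theorem of_notMem_palette (hlt : ∀ u v, G.Adj u v → c s(u, v) < k)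
    (hproper : ∀ v x y, G.Adj v x → G.Adj v y → x ≠ y → c s(v, x) ≠ c s(v, y))
    (hstar : ∀ v x y, G.Adj v x → G.Adj v y → x ≠ y →
      c s(v, x) ∈ palette G c y → c s(v, y) ∉ palette G c x) :
    IsStarEdgeColoring G k c := by
  have key : ∀ v₀ v₁ v₂ v₃ v₄, G.Adj v₀ v₁ → G.Adj v₁ v₂ → G.Adj v₂ v₃ → G.Adj v₃ v₄ →
      v₀ ≠ v₂ → v₁ ≠ v₃ → v₂ ≠ v₄ →
      3 ≤ ({c s(v₀, v₁), c s(v₁, v₂), c s(v₂, v₃), c s(v₃, v₄)} : Finset ℕ).card := by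
    intro v₀ v₁ v₂ v₃ v₄ h₀₁ h₁₂ h₂₃ h₃₄ h₀₂ h₁₃ h₂₄
    have hswap (u v : V) : c s(u, v) = c s(v, u) := by rw [Sym2.eq_swap]
    rw [three_le_card_quadruple_iff]
    · rintro ⟨h₀, h₁⟩
      refine hstar v₂ v₁ v₃ h₁₂.symm h₂₃ h₁₃ ?_ ?_
      · rw [hswap, h₁]
        exact mem_palette_of_adj c h₃₄
      · rw [← h₀, hswap]
        exact mem_palette_of_adj c h₀₁.symm
    · rw [hswap]
      exact hproper v₁ v₀ v₂ h₀₁.symm h₁₂ h₀₂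
    · rw [hswap]
      exact hproper v₂ v₁ v₃ h₁₂.symm h₂₃ h₁₃
    · rw [hswap]
      exact hproper v₃ v₂ v₄ h₂₃.symm h₃₄ h₂₄
  refine ⟨Sym2.ind hlt, hproper, fun v₀ v₁ v₂ v₃ v₄ hnodup h₀₁ h₁₂ h₂₃ h₃₄ ↦ ?_,
    fun v₀ v₁ v₂ v₃ hnodup h₀₁ h₁₂ h₂₃ h₃₀ ↦ ?_⟩
  · exact key v₀ v₁ v₂ v₃ v₄ h₀₁ h₁₂ h₂₃ h₃₄ (by grind) (by grind) (by grind)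
  · exact key v₀ v₁ v₂ v₃ v₀ h₀₁ h₁₂ h₂₃ h₃₀ (by grind) (by grind) (by grind)

theorem comap_s13 {W : Type*} {H : SimpleGraph W} {c : Sym2 W → ℕ} (hc : IsStarEdgeColoring H k c)
    (f : G.Copy H) : IsStarEdgeColoring G k (c ∘ Sym2.map f) := by
  obtain ⟨hlt, hproper, hpath, hcycle⟩ := hc
  have hadj {u v : V} : G.Adj u v → H.Adj (f u) (f v) := f.toHom.map_adj
  refine ⟨?_, ?_, ?_, ?_⟩
  · rintro ⟨u, v⟩ huv
    exact hlt s(f u, f v) (hadj huv)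
  · exact fun v x y hx hy hxy ↦ hproper _ _ _ (hadj hx) (hadj hy) (f.injective.ne hxy)
  · exact fun v₀ v₁ v₂ v₃ v₄ hnodup h₀₁ h₁₂ h₂₃ h₃₄ ↦
      hpath _ _ _ _ _ (hnodup.map f.injective) (hadj h₀₁) (hadj h₁₂) (hadj h₂₃) (hadj h₃₄)
  · exact fun v₀ v₁ v₂ v₃ hnodup h₀₁ h₁₂ h₂₃ h₃₀ ↦
      hcycle _ _ _ _ (hnodup.map f.injective) (hadj h₀₁) (hadj h₁₂) (hadj h₂₃) (hadj h₃₀)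

theorem mem_palette_or_mem_palette (hc : IsStarEdgeColoring G k c) {v : V}
    (hv : k ≤ (G.neighborSet v).encard + 1) {a b : ℕ} (ha : a < k) (hb : b < k) (hab : a ≠ b) :
    a ∈ palette G c v ∨ b ∈ palette G c v := by
  obtain ⟨hlt, hproper, -⟩ := hc
  by_contra! hmem
  have hinj : (G.neighborSet v).InjOn fun w ↦ c s(v, w) :=
    fun x hx y hy hxy ↦ by_contra fun hne ↦ hproper v x y hx hy hne hxy
  have hsub : palette G c v ⊆ (Finset.range k \ {a, b} : Finset ℕ) := by
    rintro _ ⟨w, hw, rfl⟩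
    have hwk : c s(v, w) < k := hlt s(v, w) hw
    have hwa : c s(v, w) ≠ a := fun h ↦ hmem.1 (h ▸ mem_palette_of_adj c hw)
    have hwb : c s(v, w) ≠ b := fun h ↦ hmem.2 (h ▸ mem_palette_of_adj c hw)
    simp [hwk, hwa, hwb]
  have hcard : (Finset.range k \ {a, b} : Finset ℕ).card + 1 < k := by
    rw [Finset.card_sdiff_of_subset (by grind), Finset.card_pair hab, Finset.card_range]
    grind
  have hle := Set.encard_le_encard hsub
  rw [palette, hinj.encard_image, Set.encard_coe_eq_coe_finsetCard] at hle
  have hk := hv.trans (add_le_add_left hle 1)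
  norm_cast at hk
  exact hcard.not_ge hk

theorem notMem_palette_left_or_right (hc : IsStarEdgeColoring G k c) {w x y p : V}
    (hp : k ≤ (G.neighborSet p).encard + 1) (hx : G.Adj w x) (hy : G.Adj w y) (hwp : G.Adj w p)
    (hxy : x ≠ y) (hpx : p ≠ x) (hpy : p ≠ y) :
    c s(w, p) ∉ palette G c x ∨ c s(w, p) ∉ palette G c y := by
  by_contra! ⟨hmx, hmy⟩
  obtain h | h := hc.mem_palette_or_mem_palette hp (hc.1 s(w, x) hx) (hc.1 s(w, y) hy)
    (hc.2.1 w x y hx hy hxy)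
  · exact hc.notMem_palette hwp hx hpx hmx h
  · exact hc.notMem_palette hwp hy hpy hmy h

theorem notMem_palette_of_triangle (hc : IsStarEdgeColoring G k c)
    (hdeg : ∀ v, k ≤ (G.neighborSet v).encard + 1) {x y z : V} (hxy : G.Adj x y)
    (hyz : G.Adj y z) (hzx : G.Adj z x) : c s(y, z) ∉ palette G c x := by
  rintro ⟨p, hp : G.Adj x p, hcp : c s(x, p) = c s(y, z)⟩
  have hpy : p ≠ y := by
    rintro rfl
    exact hc.2.1 p x z hp.symm hyz hzx.ne' (by rw [Sym2.eq_swap, hcp])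
  have hpz : p ≠ z := by
    rintro rfl
    exact hc.2.1 p x y hzx hyz.symm hxy.ne (by rw [Sym2.eq_swap, hcp, Sym2.eq_swap])
  obtain h | h := hc.notMem_palette_left_or_right (hdeg p) hxy hzx.symm hp hyz.ne hpy hpz
  · exact h (hcp ▸ mem_palette_of_adj c hyz)
  · exact h (hcp ▸ Sym2.eq_swap (a := z) ▸ mem_palette_of_adj c hyz.symm)

end IsStarEdgeColoring

theorem not_isStarEdgeColoring_of_triangle {V : Type*} {G : SimpleGraph V} {k : ℕ}
    {c : Sym2 V → ℕ} (hk : 4 ≤ k) (hdeg : ∀ v, k ≤ (G.neighborSet v).encard + 1) {x y z : V}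
    (hxy : G.Adj x y) (hyz : G.Adj y z) (hzx : G.Adj z x) : ¬ IsStarEdgeColoring G k c := by
  intro hc
  obtain ⟨d, hd, hdxy, hdyz, hdzx⟩ :
      ∃ d < k, d ≠ c s(x, y) ∧ d ≠ c s(y, z) ∧ d ≠ c s(z, x) := by
    obtain ⟨d, hd, hd'⟩ := Finset.exists_mem_notMem_of_card_lt_card
      (s := {c s(x, y), c s(y, z), c s(z, x)}) (t := Finset.range k)
      (Finset.card_le_three.trans_lt (by rwa [Finset.card_range]))
    exact ⟨d, by simpa using hd, by simpa using hd'⟩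
  have hmem {u v w : V} (huv : G.Adj u v) (hvw : G.Adj v w) (hwu : G.Adj w u)
      (hne : d ≠ c s(v, w)) : d ∈ palette G c u :=
    (hc.mem_palette_or_mem_palette (hdeg u) hd (hc.1 _ hvw) hne).resolve_right
      (hc.notMem_palette_of_triangle hdeg huv hvw hwu)
  obtain ⟨p, hp : G.Adj x p, rfl⟩ := hmem hxy hyz hzx hdyz
  have hpy : p ≠ y := fun h ↦ hdxy (by rw [h])
  have hpz : p ≠ z := fun h ↦ hdzx (by rw [h, Sym2.eq_swap])
  obtain h | h := hc.notMem_palette_left_or_right (hdeg p) hxy hzx.symm hp hyz.ne hpy hpz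
  · exact h (hmem hyz hzx hxy hdzx)
  · exact h (hmem hzx hxy hyz hdxy)

/-- The graph obtained from the cycles of the permutation `σ` by adding the chords `{v, μ v}`. -/
def chordedCycleGraph {V : Type*} (σ : Equiv.Perm V) (μ : V → V) : SimpleGraph V :=
  SimpleGraph.fromRel fun u v ↦ v = σ u ∨ v = μ u

/-- The three colors `rail v`, `rail (σ⁻¹ v)`, `chord v` at `v` when `rail v` is the color of
`{v, σ v}` and `chord v` is the color of `{v, μ v}`. -/
def railPalette {V : Type*} (σ : Equiv.Perm V) (rail chord : V → ℕ) (v : V) : Set ℕ :=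
  {rail v, rail (σ.symm v), chord v}

theorem mem_railPalette {V : Type*} {σ : Equiv.Perm V} {rail chord : V → ℕ} {v : V} {a : ℕ} :
    a ∈ railPalette σ rail chord v ↔ a = rail v ∨ a = rail (σ.symm v) ∨ a = chord v :=
  Iff.rfl

/-- The conditions on `rail` and `chord` under which coloring the edges `{v, σ v}` by `rail v` and
the edges `{v, μ v}` by `chord v` is a star `k`-edge coloring of `chordedCycleGraph σ μ`. -/
structure IsStarLabeling {V : Type*} (σ : Equiv.Perm V) (μ : V → V) (k : ℕ) (rail chord : V → ℕ) :
    Prop where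
  rail_lt : ∀ v, rail v < k
  chord_lt : ∀ v, chord v < k
  chord_mate : ∀ v, chord (μ v) = chord v
  rail_ne_rail : ∀ v, rail v ≠ rail (σ.symm v)
  rail_ne_chord : ∀ v, rail v ≠ chord v
  rail_symm_ne_chord : ∀ v, rail (σ.symm v) ≠ chord v
  rail_rail : ∀ v, rail (σ.symm v) ∈ railPalette σ rail chord (σ v) →
    rail v ∉ railPalette σ rail chord (σ.symm v)
  rail_chord : ∀ v, chord v ∈ railPalette σ rail chord (σ v) →
    rail v ∉ railPalette σ rail chord (μ v)
  rail_symm_chord : ∀ v, chord v ∈ railPalette σ rail chord (σ.symm v) →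
    rail (σ.symm v) ∉ railPalette σ rail chord (μ v)

theorem IsStarLabeling.const {V : Type*} {σ : Equiv.Perm V} {μ : V → V} {k : ℕ} {rail : V → ℕ}
    (hlt : ∀ v, rail v < k) (hrail : ∀ v, rail v ≠ rail (σ.symm v))
    (hrail₂ : ∀ v, rail (σ v) ≠ rail (σ.symm v))
    (hmate : ∀ v, Disjoint {rail v, rail (σ.symm v)} ({rail (μ v), rail (σ.symm (μ v))} : Set ℕ)) :
    IsStarLabeling σ μ (k + 1) rail fun _ ↦ k := by
  have hmate' (v : V) : rail v ∉ railPalette σ rail (fun _ ↦ k) (μ v) ∧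
      rail (σ.symm v) ∉ railPalette σ rail (fun _ ↦ k) (μ v) := by
    have h := hmate v
    simp only [Set.disjoint_insert_left, Set.disjoint_singleton_left, Set.mem_insert_iff,
      Set.mem_singleton_iff] at h
    simp only [mem_railPalette]
    grind
  exact {
    rail_lt v := (hlt v).trans k.lt_succ_self
    chord_lt _ := k.lt_succ_self
    chord_mate _ := rfl
    rail_ne_rail := hrail
    rail_ne_chord v := (hlt v).ne
    rail_symm_ne_chord v := (hlt _).ne
    rail_rail v h := by
      simp only [mem_railPalette, σ.symm_apply_apply] at h
      grind
    rail_chord v _ := (hmate' v).1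
    rail_symm_chord v _ := (hmate' v).2 }

section ChordedCycle

variable {V : Type*} {σ : Equiv.Perm V} {μ : V → V} {k : ℕ} {rail chord : V → ℕ}

theorem chordedCycleGraph_adj (hμ : μ.Involutive) {u v : V} :
    (chordedCycleGraph σ μ).Adj u v ↔ u ≠ v ∧ (v = σ u ∨ v = σ.symm u ∨ v = μ u) := by
  rw [chordedCycleGraph, SimpleGraph.fromRel_adj, σ.eq_symm_apply, eq_comm (a := u) (b := μ v),
    hμ.eq_iff]
  grind

theorem exists_edgeColoring_rail_chord (hσ : ∀ v, σ (σ v) ≠ v) (hμ : μ.Involutive)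
    (hσμ : ∀ v, σ v ≠ μ v) (hchord : ∀ v, chord (μ v) = chord v) :
    ∃ c : Sym2 V → ℕ, (∀ v, c s(v, σ v) = rail v) ∧ ∀ v, c s(v, μ v) = chord v := by
  have hinj : Function.Injective fun v ↦ s(v, σ v) := by
    intro u v huv
    rcases Sym2.eq_iff.1 huv with ⟨h, -⟩ | ⟨h, h'⟩
    · exact h
    · exact absurd (h ▸ h') (hσ v)
  have hfactors : chord.FactorsThrough fun v ↦ s(v, μ v) := by
    intro u v huv
    rcases Sym2.eq_iff.1 huv with ⟨rfl, -⟩ | ⟨rfl, -⟩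
    · rfl
    · exact hchord v
  have hne (v : V) : ¬ ∃ u, s(u, σ u) = s(v, μ v) := by
    rintro ⟨u, hu⟩
    rcases Sym2.eq_iff.1 hu with ⟨rfl, h⟩ | ⟨rfl, h⟩
    · exact hσμ u h
    · exact hσμ _ (h.trans (hμ v).symm)
  refine ⟨Function.extend (fun v ↦ s(v, σ v)) rail (Function.extend (fun v ↦ s(v, μ v)) chord 0),
    hinj.extend_apply _ _, fun v ↦ ?_⟩
  rw [Function.extend_apply' _ _ _ (hne v), hfactors.extend_apply]

theorem forall_chordedCycleGraph_adj_pair (hμ : μ.Involutive) {P : V → V → V → Prop}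
    (hsymm : ∀ v x y, P v x y → P v y x) (hrail : ∀ v, P v (σ v) (σ.symm v))
    (hchord : ∀ v, P v (σ v) (μ v)) (hchord' : ∀ v, P v (σ.symm v) (μ v)) (v x y : V)
    (hx : (chordedCycleGraph σ μ).Adj v x) (hy : (chordedCycleGraph σ μ).Adj v y) (hxy : x ≠ y) :
    P v x y := by
  rw [chordedCycleGraph_adj hμ] at hx hy
  grind

theorem IsStarLabeling.exists_isStarEdgeColoring (hc : IsStarLabeling σ μ k rail chord)
    (hσ : ∀ v, σ (σ v) ≠ v) (hμ : μ.Involutive) (hσμ : ∀ v, σ v ≠ μ v) :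
    ∃ c, IsStarEdgeColoring (chordedCycleGraph σ μ) k c := by
  obtain ⟨c, hrail, hchord⟩ :=
    exists_edgeColoring_rail_chord (rail := rail) hσ hμ hσμ hc.chord_mate
  have hrail' (v : V) : c s(v, σ.symm v) = rail (σ.symm v) := by
    rw [← hrail, σ.apply_symm_apply, Sym2.eq_swap]
  have hpal (v : V) : palette (chordedCycleGraph σ μ) c v ⊆ railPalette σ rail chord v := by
    rintro _ ⟨w, hw, rfl⟩
    rcases ((chordedCycleGraph_adj hμ).1 hw).2 with rfl | rfl | rfl
    · exact .inl (hrail v)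
    · exact .inr (.inl (hrail' v))
    · exact .inr (.inr (hchord v))
  have hpair := forall_chordedCycleGraph_adj_pair hμ (σ := σ)
    (P := fun v x y ↦ c s(v, x) ≠ c s(v, y) ∧ (c s(v, x) ∈ palette (chordedCycleGraph σ μ) c y →
      c s(v, y) ∉ palette (chordedCycleGraph σ μ) c x))
    (fun _ _ _ h ↦ ⟨h.1.symm, fun hy hx ↦ h.2 hx hy⟩)
    (fun v ↦ by
      rw [hrail, hrail']
      exact ⟨hc.rail_ne_rail v, fun h h' ↦ hc.rail_rail v (hpal _ h') (hpal _ h)⟩)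
    (fun v ↦ by
      rw [hrail, hchord]
      exact ⟨hc.rail_ne_chord v, fun h h' ↦ hc.rail_chord v (hpal _ h') (hpal _ h)⟩)
    (fun v ↦ by
      rw [hrail', hchord]
      exact ⟨hc.rail_symm_ne_chord v, fun h h' ↦ hc.rail_symm_chord v (hpal _ h') (hpal _ h)⟩)
  refine ⟨c, .of_notMem_palette ?_ (fun v x y hx hy hxy ↦ (hpair v x y hx hy hxy).1)
    fun v x y hx hy hxy ↦ (hpair v x y hx hy hxy).2⟩
  intro u v huv
  rcases hpal u (mem_palette_of_adj c huv) with h | h | h <;> rw [h]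
  · exact hc.rail_lt u
  · exact hc.rail_lt _
  · exact hc.chord_lt u

end ChordedCycle

theorem three_le_encard_neighborSet_chordedCycleGraph {V : Type*} {σ : Equiv.Perm V} {μ : V → V}
    (hσ₁ : ∀ v, σ v ≠ v) (hσ₂ : ∀ v, σ (σ v) ≠ v) (hμ : μ.Involutive) (hμ₁ : ∀ v, μ v ≠ v)
    (hσμ : ∀ v, σ v ≠ μ v) (v : V) : 3 ≤ ((chordedCycleGraph σ μ).neighborSet v).encard := by
  have hσ₁' : v ≠ σ.symm v := fun h ↦ hσ₁ v (σ.eq_symm_apply.1 h)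
  have hσ₂' : σ v ≠ σ.symm v := fun h ↦ hσ₂ v (σ.eq_symm_apply.1 h)
  have hσμ' : σ.symm v ≠ μ v := by
    intro h
    refine hσμ (μ v) ?_
    rw [← h, σ.apply_symm_apply, h, hμ]
  calc (3 : ℕ∞) = ({σ v, σ.symm v, μ v} : Set V).encard :=
        (Set.encard_eq_three.2 ⟨_, _, _, hσ₂', hσμ v, hσμ', rfl⟩).symm
    _ ≤ _ := Set.encard_le_encard (by
        rintro w (rfl | rfl | rfl) <;>
          simp [chordedCycleGraph_adj hμ, hσ₁', (hσ₁ v).symm, (hμ₁ v).symm])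

theorem coe_finRotate_eq_ite {n : ℕ} (p : Fin (n + 2)) :
    (finRotate (n + 2) p : ℕ) = if (p : ℕ) = n + 1 then 0 else (p : ℕ) + 1 := by
  rw [coe_finRotate]
  simp only [Fin.ext_iff, Fin.val_last]

theorem coe_finRotate_symm_eq_ite {n : ℕ} (p : Fin (n + 2)) :
    ((finRotate (n + 2)).symm p : ℕ) = if (p : ℕ) = 0 then n + 1 else (p : ℕ) - 1 := by
  have hp := coe_finRotate_eq_ite ((finRotate (n + 2)).symm p)
  rw [Equiv.apply_symm_apply] at hp
  grind

theorem finRotate_ne {n : ℕ} (p : Fin (n + 2)) : finRotate (n + 2) p ≠ p := by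
  rw [ne_eq, Fin.ext_iff, coe_finRotate_eq_ite]
  grind

theorem finRotate_finRotate_ne {n : ℕ} (hn : 1 ≤ n) (p : Fin (n + 2)) :
    finRotate (n + 2) (finRotate (n + 2) p) ≠ p := by
  rw [ne_eq, Fin.ext_iff, coe_finRotate_eq_ite, coe_finRotate_eq_ite]
  grind

/-- The third neighbor of the vertex of `Ne_h` at each position of the Hamiltonian cycle described
at `neckIndex`. It exchanges `p` and `2h + 2 - p`, except that it also exchanges the two fixed
points `0` and `h + 1` of this reflection, which are the positions of `u_1` and `u_{h+1}`. -/
def necklaceMate (h : ℕ) (p : Fin (2 * h + 2)) : Fin (2 * h + 2) :=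
  ⟨if (p : ℕ) = 0 then h + 1 else if (p : ℕ) = h + 1 then 0 else 2 * h + 2 - p, by grind⟩

theorem involutive_necklaceMate (h : ℕ) : (necklaceMate h).Involutive := by
  intro p
  ext
  simp only [necklaceMate]
  grind

theorem necklaceMate_ne {h : ℕ} (p : Fin (2 * h + 2)) : necklaceMate h p ≠ p := by
  rw [ne_eq, Fin.ext_iff, necklaceMate]
  grind

theorem finRotate_ne_necklaceMate {h : ℕ} (hh : 1 ≤ h) (p : Fin (2 * h + 2)) :
    finRotate (2 * h + 2) p ≠ necklaceMate h p := by
  rw [ne_eq, Fin.ext_iff, coe_finRotate_eq_ite, necklaceMate]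
  grind

theorem neckCycle_succ {m : ℕ} (hm : 1 ≤ m) :
    neckCycle (m + 1) = 0 :: (List.range' 2 m ++ [m + 2, 1]) := by
  obtain ⟨m, rfl⟩ := Nat.exists_eq_add_of_le' hm
  simp [neckCycle, List.range'_concat, Nat.add_comm 2]

theorem neckCycle_succ_rotate {m : ℕ} (hm : 1 ≤ m) :
    (neckCycle (m + 1)).rotate 1 = 2 :: (List.range' 3 m ++ [1, 0]) := by
  have hrange : List.range' 2 m ++ [m + 2] = 2 :: List.range' 3 m := by
    rw [← List.range'_succ (step := 1), List.range'_concat, one_mul, Nat.add_comm]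
  rw [neckCycle_succ hm, List.rotate_cons_succ, List.rotate_zero]
  simpa using congrArg (· ++ [1, 0]) hrange

theorem mem_zip_range' {a b n m : ℕ} :
    (a, b) ∈ (List.range' n m).zip (List.range' (n + 1) m) ↔ n ≤ a ∧ a < n + m ∧ b = a + 1 := by
  induction m generalizing n with
  | zero =>
    simp only [List.range'_zero, List.zip_nil_left, List.not_mem_nil, false_iff]
    omega
  | succ m ih =>
    rw [List.range'_succ, List.range'_succ, List.zip_cons_cons, List.mem_cons, ih, Prod.mk.injEq]
    omega

theorem mem_zip_neckCycle_iff {h : ℕ} (hh : 2 ≤ h) {a b : ℕ} :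
    (a, b) ∈ (neckCycle h).zip ((neckCycle h).rotate 1) ↔
      a = 0 ∧ b = 2 ∨ 2 ≤ a ∧ a ≤ h ∧ b = a + 1 ∨ a = h + 1 ∧ b = 1 ∨ a = 1 ∧ b = 0 := by
  obtain ⟨m, rfl⟩ : ∃ m, h = m + 1 := ⟨h - 1, by omega⟩
  have hm : 1 ≤ m := by omega
  rw [neckCycle_succ_rotate hm, neckCycle_succ hm, List.zip_cons_cons,
    List.zip_append (by simp), List.mem_cons, List.mem_append, mem_zip_range']
  simp only [Prod.mk.injEq, List.zip_cons_cons, List.zip_nil_left, List.mem_cons, List.not_mem_nil,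
    or_false]
  omega

/-- The position of a vertex on the Hamiltonian cycle `u_1 v_1 v_2 ⋯ v_h u_{h+1} u_h ⋯ u_2 u_0` of
`Ne_h`, counted from `0` at `u_1`. -/
def neckIndex (h : ℕ) : NeckVert h → Fin (2 * h + 2)
  | Sum.inl i => ⟨i + 1, by omega⟩
  | Sum.inr j =>
    ⟨if (j : ℕ) = 0 then 2 * h + 1 else if (j : ℕ) = 1 then 0 else 2 * h + 2 - j, by grind⟩

theorem neckIndex_injective (h : ℕ) : Function.Injective (neckIndex h) := by
  rintro (i | i) (j | j) hij <;> simp only [neckIndex, Fin.mk.injEq] at hij <;> grind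

theorem chordedCycleGraph_adj_neckIndex {h : ℕ} (hh : 2 ≤ h) {u v : NeckVert h} :
    (chordedCycleGraph (finRotate (2 * h + 2)) (necklaceMate h)).Adj (neckIndex h u)
      (neckIndex h v) ↔ (necklace h).Adj u v := by
  rw [chordedCycleGraph_adj (involutive_necklaceMate h), necklace, SimpleGraph.fromRel_adj,
    (neckIndex_injective h).ne_iff]
  refine and_congr_right fun _ ↦ ?_
  simp only [Fin.ext_iff, coe_finRotate_eq_ite, coe_finRotate_symm_eq_ite, necklaceMate]
  rcases u with i | i <;> rcases v with j | j <;>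
    simp only [neckRel, neckIndex, mem_zip_neckCycle_iff hh] <;>
    grind (splits := 20)

theorem neckIndex_bijective (h : ℕ) : Function.Bijective (neckIndex h) := by
  rw [Fintype.bijective_iff_injective_and_card, Fintype.card_sum, Fintype.card_fin,
    Fintype.card_fin, Fintype.card_fin]
  exact ⟨neckIndex_injective h, by omega⟩

/-- The necklace as a Hamiltonian cycle together with the chords between mates. -/
noncomputable def necklaceIso {h : ℕ} (hh : 2 ≤ h) :
    necklace h ≃g chordedCycleGraph (finRotate (2 * h + 2)) (necklaceMate h) where
  toEquiv := Equiv.ofBijective (neckIndex h) (neckIndex_bijective h)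
  map_rel_iff' := chordedCycleGraph_adj_neckIndex hh

theorem not_isStarEdgeColoring_four_necklace {h : ℕ} (hh : 2 ≤ h) (c : Sym2 (NeckVert h) → ℕ) :
    ¬ IsStarEdgeColoring (necklace h) 4 c := by
  intro hc
  have hμ := involutive_necklaceMate h
  have hdeg (v : Fin (2 * h + 2)) : ((4 : ℕ) : ℕ∞) ≤
      ((chordedCycleGraph (finRotate (2 * h + 2)) (necklaceMate h)).neighborSet v).encard + 1 :=
    add_le_add_left (three_le_encard_neighborSet_chordedCycleGraph finRotate_ne
      (finRotate_finRotate_ne (by omega)) hμ necklaceMate_ne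
      (finRotate_ne_necklaceMate (by omega)) v) 1
  -- The triangle `u_1 v_1 u_0`.
  refine not_isStarEdgeColoring_of_triangle (le_refl 4) hdeg
    (x := ⟨0, by omega⟩) (y := ⟨1, by omega⟩) (z := ⟨2 * h + 1, by omega⟩) ?_ ?_ ?_
    (hc.comap_s13 (necklaceIso hh).symm.toCopy) <;>
    simp only [chordedCycleGraph_adj hμ, ne_eq, Fin.ext_iff, coe_finRotate_eq_ite,
      coe_finRotate_symm_eq_ite, necklaceMate] <;>
    grind

/-- The rail colors for odd `h`: position `p` receives `p` modulo `4` up the spine, and for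
`1 ≤ p ≤ h` the colors at `p` and `2h + 2 - p` are `{p, p - 1}` and `{p + 1, p + 2}` modulo `4`. -/
def foldedRail (h : ℕ) (p : Fin (2 * h + 2)) : ℕ :=
  if (p : ℕ) ≤ h then p % 4 else (2 * h + 3 - p) % 4

theorem isStarLabeling_foldedRail {h : ℕ} (hodd : Odd h) :
    IsStarLabeling (finRotate (2 * h + 2)) (necklaceMate h) 5 (foldedRail h) fun _ ↦ 4 := by
  rw [Nat.odd_iff] at hodd
  refine .const (fun p ↦ ?_) (fun p ↦ ?_) (fun p ↦ ?_) (fun p ↦ ?_)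
  · grind [foldedRail]
  · simp only [foldedRail, coe_finRotate_symm_eq_ite]
    grind
  · simp only [foldedRail, coe_finRotate_eq_ite, coe_finRotate_symm_eq_ite]
    grind
  · simp only [foldedRail, coe_finRotate_symm_eq_ite, necklaceMate, Set.disjoint_insert_left,
      Set.disjoint_singleton_left, Set.mem_insert_iff, Set.mem_singleton_iff]
    grind

/-- The rail colors for even `h`: `foldedRail` changed near `u_1`, where its colors at `u_1` and at
the mate `u_{h+1}` agree when `h` is even. -/
def patchedRail (h : ℕ) (p : Fin (2 * h + 2)) : ℕ :=
  if (p : ℕ) = 0 ∨ (p : ℕ) = 2 * h then 1 else if (p : ℕ) = 1 then 0 else foldedRail h p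

/-- The chord colors for even `h`: color `3`, which `patchedRail` no longer uses near `u_1`, is
given to the chords `u_1 u_{h+1}` and `v_2 u_2`. -/
def patchedChord (h : ℕ) (p : Fin (2 * h + 2)) : ℕ :=
  if (p : ℕ) = 0 ∨ (p : ℕ) = 2 ∨ (p : ℕ) = 2 * h ∨ (p : ℕ) = h + 1 then 3 else 4

theorem patchedRail_mem_railPalette_mate {h : ℕ} (hh : 2 ≤ h) (heven : Even h)
    {p : Fin (2 * h + 2)}
    (hp : patchedRail h p ∈
      railPalette (finRotate (2 * h + 2)) (patchedRail h) (patchedChord h) (necklaceMate h p)) :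
    (p : ℕ) = h + 1 ∧ h % 4 = 0 := by
  rw [Nat.even_iff] at heven
  simp only [mem_railPalette, patchedRail, foldedRail, patchedChord, coe_finRotate_symm_eq_ite,
    necklaceMate] at hp
  grind (splits := 20)

theorem patchedRail_symm_mem_railPalette_mate {h : ℕ} (heven : Even h)
    {p : Fin (2 * h + 2)}
    (hp : patchedRail h ((finRotate (2 * h + 2)).symm p) ∈
      railPalette (finRotate (2 * h + 2)) (patchedRail h) (patchedChord h) (necklaceMate h p)) :
    (p : ℕ) ≤ 2 ∨ 2 * h ≤ p ∨ (p : ℕ) = h + 1 ∧ h % 4 = 2 := by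
  rw [Nat.even_iff] at heven
  simp only [mem_railPalette, patchedRail, foldedRail, patchedChord, coe_finRotate_symm_eq_ite,
    necklaceMate] at hp
  grind (splits := 20)

theorem isStarLabeling_patchedRail {h : ℕ} (hh : 4 ≤ h) (heven : Even h) :
    IsStarLabeling (finRotate (2 * h + 2)) (necklaceMate h) 5 (patchedRail h) (patchedChord h) := by
  have hmod := Nat.even_iff.1 heven
  constructor <;> intro p
  case rail_lt => grind [patchedRail, foldedRail]
  case chord_lt => grind [patchedChord]
  case chord_mate =>
    simp only [patchedChord, necklaceMate]
    grind
  case rail_chord =>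
    intro hchord hrail
    obtain ⟨hp, hmod'⟩ := patchedRail_mem_railPalette_mate (by omega) heven hrail
    simp only [mem_railPalette, patchedRail, foldedRail, patchedChord, coe_finRotate_eq_ite,
      coe_finRotate_symm_eq_ite, hp] at hchord
    grind
  case rail_symm_chord =>
    intro hchord hrail
    have hp := patchedRail_symm_mem_railPalette_mate heven hrail
    obtain hp | hp | hp | hp | hp | ⟨hp, hmod'⟩ : (p : ℕ) = 0 ∨ (p : ℕ) = 1 ∨ (p : ℕ) = 2 ∨
        (p : ℕ) = 2 * h ∨ (p : ℕ) = 2 * h + 1 ∨ (p : ℕ) = h + 1 ∧ h % 4 = 2 := by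
      omega
    all_goals
      simp only [mem_railPalette, patchedRail, foldedRail, patchedChord,
        coe_finRotate_symm_eq_ite, hp] at hchord
      grind
  case rail_rail =>
    simp only [mem_railPalette, Equiv.symm_apply_apply, patchedRail, foldedRail, patchedChord,
      coe_finRotate_eq_ite, coe_finRotate_symm_eq_ite]
    grind (splits := 20)
  all_goals
    simp only [patchedRail, foldedRail, patchedChord, coe_finRotate_symm_eq_ite]
    grind (splits := 20)

theorem exists_isStarLabeling_necklaceMate {h : ℕ} (hh : 3 ≤ h) :
    ∃ rail chord, IsStarLabeling (finRotate (2 * h + 2)) (necklaceMate h) 5 rail chord := by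
  rcases Nat.even_or_odd h with heven | hodd
  · exact ⟨_, _, isStarLabeling_patchedRail (by grind) heven⟩
  · exact ⟨_, _, isStarLabeling_foldedRail hodd⟩

theorem exists_isStarEdgeColoring_five_necklace {h : ℕ} (hh : 3 ≤ h) :
    ∃ c, IsStarEdgeColoring (necklace h) 5 c := by
  obtain ⟨rail, chord, hlabel⟩ := exists_isStarLabeling_necklaceMate hh
  obtain ⟨c, hc⟩ := hlabel.exists_isStarEdgeColoring (finRotate_finRotate_ne (by omega))
    (involutive_necklaceMate h) (finRotate_ne_necklaceMate (by omega))
  exact ⟨_, hc.comap_s13 (necklaceIso (by omega)).toCopy⟩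

/-- For every `h ≥ 3`, the necklace `Ne_h` has star chromatic index exactly 5:
it admits a star 5-edge coloring but no star 4-edge coloring. -/
theorem starChromaticIndex_necklace (h : ℕ) (hh : 3 ≤ h) :
    (∃ c : Sym2 (NeckVert h) → ℕ, IsStarEdgeColoring (necklace h) 5 c) ∧
    ¬ ∃ c : Sym2 (NeckVert h) → ℕ, IsStarEdgeColoring (necklace h) 4 c :=
  ⟨exists_isStarEdgeColoring_five_necklace hh, fun ⟨c, hc⟩ ↦
    not_isStarEdgeColoring_four_necklace (by omega) c hc⟩
end
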